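/- (Theorem 3.) Fix γ > 0, d_M > 0, d_K > 0 and set C = log₂(1+γ), V = 1 − (1+γ)^{−2}, ε(n, d) = Q((ln 2)·√(n/V)·(C − d/n)). Let S ≥ 3 be an integer, let D_loss > 0, D_conf > 0 and 0 < α ≤ 1, and define the Exclusion-strategy distortion D̆(n_M, n_K) = ε(n_M, d_M)·D_loss + (1 − ε(n_M, d_M))·( ε(n_K, d_K)·α·((S−2)/(S−1))·D_conf + (1 − α)·D_conf ). Let 0 < a_M ≤ b_M and 0 < a_K ≤ b_K be blocklength bounds and write ε_K^max = ε(a_K, d_K). If D_conf > D_loss and α < (D_conf − D_loss)/(D_conf·(1 − ε_K^max·(S−2)/(S−1))), then for all (n_M, n_K) ∈ [a_M, b_M] × [a_K, b_K] one has D̆(n_M, n_K) ≤ D̆(b_M, a_K), i.e. the maximum is attained at (n_M^max, n_K^min); whereas if α ≥ (D_conf − D_loss)/(D_conf·(1 − ε_K^max·(S−2)/(S−1))), then for all (n_M, n_K) in the box one has D̆(n_M, n_K) ≤ D̆(a_M, a_K), i.e. the maximum is attained at (n_M^min, n_K^min). -/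

import Mathlib

/-- The Gaussian Q-function `Q(x) = (1/√(2π)) ∫_x^∞ e^{−t²/2} dt`. -/
noncomputable def gaussQ (x : ℝ) : ℝ :=
  (Real.sqrt (2 * Real.pi))⁻¹ * ∫ t in Set.Ioi x, Real.exp (-t ^ 2 / 2)

/-- Finite-blocklength error probability for SNR `γ`, payload `d`, blocklength `n`,
with capacity `C = log₂(1+γ)` and dispersion `V = 1 − (1+γ)^{−2}`. -/
noncomputable def epsFBL (γ d n : ℝ) : ℝ :=
  gaussQ (Real.log 2 * Real.sqrt (n / (1 - ((1 + γ) ^ 2)⁻¹)) *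
    (Real.logb 2 (1 + γ) - d / n))

/-- The eavesdropper's expected semantic distortion under the Exclusion strategy,
`D̆(n_M, n_K) = ε(n_M,d_M)·D_loss +
  (1 − ε(n_M,d_M))·(ε(n_K,d_K)·α·((S−2)/(S−1))·D_conf + (1 − α)·D_conf)`. -/
noncomputable def exclusionDistortion
    (γ dM dK Dloss Dconf α : ℝ) (S : ℤ) (nM nK : ℝ) : ℝ :=
  epsFBL γ dM nM * Dloss +
    (1 - epsFBL γ dM nM) *
      (epsFBL γ dK nK * α * (((S : ℝ) - 2) / ((S : ℝ) - 1)) * Dconf +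
        (1 - α) * Dconf)

open MeasureTheory in
theorem integrable_exp_neg_sq_div_two : Integrable fun t : ℝ => Real.exp (-t ^ 2 / 2) := by
  refine (integrable_exp_neg_mul_sq (b := 1 / 2) (by norm_num)).congr (.of_forall fun t => ?_)
  ring_nf

theorem integral_exp_neg_sq_div_two :
    ∫ t : ℝ, Real.exp (-t ^ 2 / 2) = Real.sqrt (2 * Real.pi) := by
  have h := integral_gaussian (1 / 2)
  rw [show Real.pi / (1 / 2) = 2 * Real.pi by ring] at h
  rw [← h]
  congr 1 with t
  ring_nf

theorem gaussQ_le_one (x : ℝ) : gaussQ x ≤ 1 := by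
  have h : ∫ t in Set.Ioi x, Real.exp (-t ^ 2 / 2) ≤ Real.sqrt (2 * Real.pi) := by
    rw [← integral_exp_neg_sq_div_two]
    exact MeasureTheory.setIntegral_le_integral integrable_exp_neg_sq_div_two
      (.of_forall fun t => (Real.exp_pos _).le)
  have hpos : 0 < Real.sqrt (2 * Real.pi) := by positivity
  calc gaussQ x ≤ (Real.sqrt (2 * Real.pi))⁻¹ * Real.sqrt (2 * Real.pi) :=
        mul_le_mul_of_nonneg_left h (by positivity)
    _ = 1 := inv_mul_cancel₀ hpos.ne'

theorem gaussQ_antitone : Antitone gaussQ := fun _ _ hxy =>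
  mul_le_mul_of_nonneg_left
    (MeasureTheory.setIntegral_mono_set integrable_exp_neg_sq_div_two.integrableOn
      (.of_forall fun _ => (Real.exp_pos _).le) (Set.Ioi_subset_Ioi hxy).eventuallyLE)
    (by positivity)

theorem sqrt_mul_sub_div_monotoneOn {c d : ℝ} (hc : 0 ≤ c) (hd : 0 ≤ d) :
    MonotoneOn (fun n : ℝ => Real.sqrt n * (c - d / n)) (Set.Ioi 0) := by
  have key : ∀ n : ℝ, Real.sqrt n * (c - d / n) = c * Real.sqrt n - d / Real.sqrt n := by
    intro n
    rw [mul_sub, mul_comm, mul_div_left_comm, Real.sqrt_div_self', mul_one_div]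
  intro m hm n _ hmn
  have hm0 : 0 < Real.sqrt m := Real.sqrt_pos.2 hm
  simp only [key]
  gcongr

theorem epsFBL_antitoneOn {γ d : ℝ} (hγ : 0 < γ) (hd : 0 < d) :
    AntitoneOn (epsFBL γ d) (Set.Ioi 0) := by
  intro m hm n hn hmn
  refine gaussQ_antitone ?_
  have hC : 0 ≤ Real.logb 2 (1 + γ) := Real.logb_nonneg (by norm_num) (by linarith)
  have h := sqrt_mul_sub_div_monotoneOn hC hd.le hm hn hmn
  have hlog : 0 ≤ Real.log 2 := Real.log_nonneg (by norm_num)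
  rw [Real.sqrt_div (Set.mem_Ioi.1 hm).le, Real.sqrt_div (Set.mem_Ioi.1 hn).le]
  have h' := mul_le_mul_of_nonneg_left h
    (div_nonneg hlog (Real.sqrt_nonneg (1 - ((1 + γ) ^ 2)⁻¹)))
  convert h' using 1 <;> ring

/-- Theorem 3: writing `ε_K^max = ε(a_K, d_K)`, if `D_conf > D_loss` and
`α < (D_conf − D_loss)/(D_conf·(1 − ε_K^max·(S−2)/(S−1)))`, the maximum of the
Exclusion-strategy distortion over the box `[a_M, b_M] × [a_K, b_K]` is attained
at `(b_M, a_K) = (n_M^max, n_K^min)`; whereas if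
`α ≥ (D_conf − D_loss)/(D_conf·(1 − ε_K^max·(S−2)/(S−1)))`, it is attained at
`(a_M, a_K) = (n_M^min, n_K^min)`. -/
theorem exclusion_distortion_max
    (γ dM dK Dloss Dconf α aM bM aK bK : ℝ) (S : ℤ)
    (hγ : 0 < γ) (hdM : 0 < dM) (hdK : 0 < dK) (hS : 3 ≤ S)
    (hDloss : 0 < Dloss) (hDconf : 0 < Dconf) (hα0 : 0 < α) (hα1 : α ≤ 1)
    (haM : 0 < aM) (hMb : aM ≤ bM) (haK : 0 < aK) (hKb : aK ≤ bK) :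
    ((Dloss < Dconf ∧
        α < (Dconf - Dloss) /
          (Dconf * (1 - epsFBL γ dK aK * (((S : ℝ) - 2) / ((S : ℝ) - 1)))) →
      ∀ nM ∈ Set.Icc aM bM, ∀ nK ∈ Set.Icc aK bK,
        exclusionDistortion γ dM dK Dloss Dconf α S nM nK ≤
          exclusionDistortion γ dM dK Dloss Dconf α S bM aK)) ∧
    ((Dconf - Dloss) /
        (Dconf * (1 - epsFBL γ dK aK * (((S : ℝ) - 2) / ((S : ℝ) - 1)))) ≤ α →
      ∀ nM ∈ Set.Icc aM bM, ∀ nK ∈ Set.Icc aK bK,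
        exclusionDistortion γ dM dK Dloss Dconf α S nM nK ≤
          exclusionDistortion γ dM dK Dloss Dconf α S aM aK) := by
  have hS' : (3 : ℝ) ≤ S := by exact_mod_cast hS
  set r : ℝ := ((S : ℝ) - 2) / ((S : ℝ) - 1) with hr
  have hr0 : 0 ≤ r := div_nonneg (by linarith) (by linarith)
  have hr1 : r < 1 := by rw [hr, div_lt_one] <;> linarith
  have hε1 : epsFBL γ dK aK ≤ 1 := gaussQ_le_one _
  have hden : 0 < Dconf * (1 - epsFBL γ dK aK * r) :=
    mul_pos hDconf (by nlinarith)
  have key : ∀ nM, ∀ nK ∈ Set.Icc aK bK,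
      exclusionDistortion γ dM dK Dloss Dconf α S nM nK ≤
        exclusionDistortion γ dM dK Dloss Dconf α S nM aK := by
    intro nM nK hnK
    have hK : epsFBL γ dK nK ≤ epsFBL γ dK aK :=
      epsFBL_antitoneOn hγ hdK haK (haK.trans_le hnK.1) hnK.1
    have hM : 0 ≤ 1 - epsFBL γ dM nM := sub_nonneg.2 (gaussQ_le_one _)
    unfold exclusionDistortion
    rw [← hr]
    gcongr
  have affine : ∀ m n, exclusionDistortion γ dM dK Dloss Dconf α S n aK -
      exclusionDistortion γ dM dK Dloss Dconf α S m aK =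
      (epsFBL γ dM m - epsFBL γ dM n) *
        (Dconf - Dloss - α * (Dconf * (1 - epsFBL γ dK aK * r))) := by
    intro m n
    unfold exclusionDistortion
    rw [← hr]
    ring
  constructor
  · rintro ⟨-, h⟩ nM hnM nK hnK
    rw [lt_div_iff₀ hden] at h
    have hM : epsFBL γ dM bM ≤ epsFBL γ dM nM :=
      epsFBL_antitoneOn hγ hdM (haM.trans_le hnM.1) (haM.trans_le hMb) hnM.2
    refine (key nM nK hnK).trans (sub_nonneg.1 ?_)
    rw [affine]
    exact mul_nonneg (sub_nonneg.2 hM) (sub_nonneg.2 h.le)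
  · intro h nM hnM nK hnK
    rw [div_le_iff₀ hden] at h
    have hM : epsFBL γ dM nM ≤ epsFBL γ dM aM :=
      epsFBL_antitoneOn hγ hdM haM (haM.trans_le hnM.1) hnM.1
    refine (key nM nK hnK).trans (sub_nonneg.1 ?_)
    rw [affine]
    exact mul_nonneg_of_nonpos_of_nonpos (sub_nonpos.2 hM) (sub_nonpos.2 h)
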